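/- Let g : ℝ^n → ℝ be a polynomial, let 0 ≤ λ ≤ 1, and let m ∈ ℕ. Then E_{x∼N(0,1)^n}[ W^{=m}[g_{λ|x}] ] = Σ_{M ≥ m} binom(M,m)·λ^m·(1−λ)^{M−m}·W^{=M}[g]. -/

import Mathlib

open MeasureTheory ProbabilityTheory MvPolynomial

/-- The standard Gaussian measure `N(0,1)^n` on `ℝ^n`. -/
noncomputable def gaussianN (n : ℕ) : Measure (Fin n → ℝ) :=
  Measure.pi fun _ => gaussianReal 0 1

/-- The normalized probabilists' Hermite polynomial `h_k = H_k / √(k!)`. -/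
noncomputable def hermiteFn (k : ℕ) (t : ℝ) : ℝ :=
  ((Polynomial.hermite k).map (Int.castRingHom ℝ)).eval t / Real.sqrt (Nat.factorial k)

/-- The multivariate Hermite polynomial `h_α(x) = ∏ i, h_{α i}(x i)`. -/
noncomputable def hermiteMv {n : ℕ} (α : Fin n → ℕ) (x : Fin n → ℝ) : ℝ :=
  ∏ i, hermiteFn (α i) (x i)

/-- Hermite coefficient `f̂(α) = E_{x ∼ N(0,1)^n}[f(x)·h_α(x)]` of a function. -/
noncomputable def hermiteCoeffF {n : ℕ} (f : (Fin n → ℝ) → ℝ) (α : Fin n → ℕ) : ℝ :=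
  ∫ x, f x * hermiteMv α x ∂(gaussianN n)

/-- Hermite coefficient `ĝ(α)` of a polynomial. -/
noncomputable def hermiteCoeff {n : ℕ} (g : MvPolynomial (Fin n) ℝ) (α : Fin n → ℕ) : ℝ :=
  hermiteCoeffF (fun x => eval x g) α

/-- The squared Gaussian 2-norm `‖g‖₂² = E_{x ∼ N(0,1)^n}[g(x)²]`. -/
noncomputable def norm2sq {n : ℕ} (g : MvPolynomial (Fin n) ℝ) : ℝ :=
  ∫ x, (eval x g) ^ 2 ∂(gaussianN n)

/-- The `λ`-zoom of `g` at `x`: `g_{λ|x}(y) = g(√(1-λ)·x + √λ·y)`, as a polynomial in `y`. -/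
noncomputable def zoom {n : ℕ} (g : MvPolynomial (Fin n) ℝ) (lam : ℝ) (x : Fin n → ℝ) :
    MvPolynomial (Fin n) ℝ :=
  aeval (fun i => C (Real.sqrt (1 - lam) * x i) + C (Real.sqrt lam) * X i) g

/-- `HyperVar_R[g^{≥m}] = Σ_{|α| ≥ m} R^{2|α|}·ĝ(α)²`. -/
noncomputable def hyperVarGE {n : ℕ} (R : ℝ) (m : ℕ) (g : MvPolynomial (Fin n) ℝ) : ℝ :=
  ∑' α : Fin n → ℕ, if m ≤ ∑ i, α i then R ^ (2 * ∑ i, α i) * hermiteCoeff g α ^ 2 else 0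

/-- `HyperVar_R[g] = Σ_{α ≠ 0} R^{2|α|}·ĝ(α)²`. -/
noncomputable def hyperVar {n : ℕ} (R : ℝ) (g : MvPolynomial (Fin n) ℝ) : ℝ :=
  hyperVarGE R 1 g

/-- A nice distribution of polynomials of degree at most `d` on `ℝ^n`, indexed by
`υ ∈ ℝ^I`: each `g υ` has degree at most `d` and each coefficient of `g υ` is a
polynomial of degree at most `d` in `υ`. -/
def NiceFamily (n I d : ℕ) (g : (Fin I → ℝ) → MvPolynomial (Fin n) ℝ) : Prop :=
  (∀ υ, (g υ).totalDegree ≤ d) ∧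
  ∀ m : Fin n →₀ ℕ, ∃ P : MvPolynomial (Fin I) ℝ,
    P.totalDegree ≤ d ∧ ∀ υ, coeff m (g υ) = eval υ P

/-- Level-`m` Hermite weight `W^{=m}[g] = Σ_{|α| = m} ĝ(α)²`. -/
noncomputable def weightEq {n : ℕ} (m : ℕ) (g : MvPolynomial (Fin n) ℝ) : ℝ :=
  ∑' α : Fin n → ℕ, if (∑ i, α i) = m then hermiteCoeff g α ^ 2 else 0

open Finset

lemma derivative_hermite_succ (k : ℕ) :
    Polynomial.derivative (Polynomial.hermite (k + 1)) =
      ((k : Polynomial ℤ) + 1) * Polynomial.hermite k := by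
  induction k with
  | zero => simp
  | succ k ih =>
    rw [Polynomial.hermite_succ (k + 1), Polynomial.derivative_sub, Polynomial.derivative_mul, ih,
      Polynomial.derivative_mul]
    have h := Polynomial.hermite_succ k
    have hk : Polynomial.derivative ((k : Polynomial ℤ) + 1) = 0 := by simp
    rw [hk, h]
    simp only [Polynomial.derivative_X]
    push_cast
    ring

/-- The probabilists' Hermite polynomial with real coefficients. -/
noncomputable def realHermite (k : ℕ) : Polynomial ℝ :=
  (Polynomial.hermite k).map (Int.castRingHom ℝ)

lemma realHermite_zero : realHermite 0 = 1 := by simp [realHermite]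

lemma realHermite_succ (k : ℕ) :
    realHermite (k + 1) =
      Polynomial.X * realHermite k - Polynomial.derivative (realHermite k) := by
  simp [realHermite, Polynomial.hermite_succ, Polynomial.derivative_map]

lemma derivative_realHermite_succ (k : ℕ) :
    Polynomial.derivative (realHermite (k + 1)) =
      ((k : Polynomial ℝ) + 1) * realHermite k := by
  rw [realHermite, Polynomial.derivative_map, derivative_hermite_succ]
  simp [realHermite]

lemma realHermite_eval_succ (k : ℕ) (t : ℝ) :
    (realHermite (k + 1)).eval t =
      t * (realHermite k).eval t - (Polynomial.derivative (realHermite k)).eval t := by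
  simp [realHermite_succ]

/-- Addition formula for Hermite polynomials under a rotation. -/
lemma realHermite_eval_add {a b : ℝ} (hab : a ^ 2 + b ^ 2 = 1) (k : ℕ) (x y : ℝ) :
    (realHermite k).eval (a * x + b * y) =
      ∑ p ∈ antidiagonal k, (k.choose p.1 : ℝ) *
        (a ^ p.1 * b ^ p.2 * (realHermite p.1).eval x * (realHermite p.2).eval y) := by
  induction k generalizing x y with
  | zero => simp [realHermite_zero]
  | succ k ih =>
    have hx : (Polynomial.derivative (realHermite k)).eval (a * x + b * y) * a =
        ∑ p ∈ antidiagonal k, (k.choose p.1 : ℝ) * (a ^ p.1 * b ^ p.2 *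
          (Polynomial.derivative (realHermite p.1)).eval x * (realHermite p.2).eval y) := by
      have h1 : HasDerivAt (fun x => (realHermite k).eval (a * x + b * y))
          ((Polynomial.derivative (realHermite k)).eval (a * x + b * y) * a) x := by
        refine HasDerivAt.comp x (Polynomial.hasDerivAt _ _) ?_
        simpa using ((hasDerivAt_id x).const_mul a).add_const (b * y)
      refine h1.unique ?_
      simp only [ih]
      refine HasDerivAt.fun_sum fun p _ => ?_
      exact ((((realHermite p.1).hasDerivAt x).const_mul _).mul_const _).const_mul _
    have hy : (Polynomial.derivative (realHermite k)).eval (a * x + b * y) * b =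
        ∑ p ∈ antidiagonal k, (k.choose p.1 : ℝ) * (a ^ p.1 * b ^ p.2 *
          (realHermite p.1).eval x * (Polynomial.derivative (realHermite p.2)).eval y) := by
      have h1 : HasDerivAt (fun y => (realHermite k).eval (a * x + b * y))
          ((Polynomial.derivative (realHermite k)).eval (a * x + b * y) * b) y := by
        refine HasDerivAt.comp y (Polynomial.hasDerivAt _ _) ?_
        simpa using ((hasDerivAt_id y).const_mul b).const_add (a * x)
      refine h1.unique ?_
      simp only [ih]
      refine HasDerivAt.fun_sum fun p _ => ?_
      exact (((realHermite p.2).hasDerivAt y).const_mul _).const_mul _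
    have hd : (Polynomial.derivative (realHermite k)).eval (a * x + b * y) =
        a * ((Polynomial.derivative (realHermite k)).eval (a * x + b * y) * a) +
        b * ((Polynomial.derivative (realHermite k)).eval (a * x + b * y) * b) := by
      linear_combination
        (-(Polynomial.derivative (realHermite k)).eval (a * x + b * y)) * hab
    rw [realHermite_eval_succ, hd, hx, hy, ih, sum_antidiagonal_choose_succ_mul
      (fun i j => a ^ i * b ^ j * (realHermite i).eval x * (realHermite j).eval y)]
    simp only [mul_sum, ← sum_add_distrib, ← sum_sub_distrib]
    refine sum_congr rfl fun p hp => ?_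
    rw [realHermite_eval_succ, realHermite_eval_succ,
      ← Nat.choose_symm_of_eq_add (mem_antidiagonal.1 hp).symm]
    ring

lemma hermiteFn_eq (k : ℕ) (t : ℝ) :
    hermiteFn k t = (realHermite k).eval t / √(k.factorial) := rfl

lemma hermiteFn_zero (t : ℝ) : hermiteFn 0 t = 1 := by
  simp [hermiteFn_eq, realHermite_zero]

/-- The coefficient of `h_{k-j}(x) h_j(y)` in `h_k(a x + b y)`. -/
noncomputable def rotationCoeff (a b : ℝ) (k j : ℕ) : ℝ :=
  √(k.choose j) * a ^ (k - j) * b ^ j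

lemma rotationCoeff_of_lt (a b : ℝ) {k j : ℕ} (h : k < j) : rotationCoeff a b k j = 0 := by
  simp [rotationCoeff, Nat.choose_eq_zero_of_lt h]

lemma rotationCoeff_sq (a b : ℝ) (k j : ℕ) :
    rotationCoeff a b k j ^ 2 = k.choose j * (a ^ 2) ^ (k - j) * (b ^ 2) ^ j := by
  rw [rotationCoeff, mul_pow, mul_pow, Real.sq_sqrt (Nat.cast_nonneg _)]
  ring

lemma hermiteFn_rotation {a b : ℝ} (hab : a ^ 2 + b ^ 2 = 1) {k K : ℕ} (hk : k < K)
    (x y : ℝ) :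
    hermiteFn k (a * x + b * y) =
      ∑ j ∈ range K, rotationCoeff a b k j * hermiteFn (k - j) x * hermiteFn j y := by
  have hsub : range (k + 1) ⊆ range K := range_subset_range.2 hk
  rw [← sum_subset hsub fun j _ hj => by
    rw [rotationCoeff_of_lt a b (by simpa using hj)]; ring]
  rw [hermiteFn_eq, realHermite_eval_add hab,
    ← Nat.sum_antidiagonal_swap, Nat.sum_antidiagonal_eq_sum_range_succ_mk, sum_div]
  refine sum_congr rfl fun j hj => ?_
  have hjk : j ≤ k := Nat.lt_succ_iff.1 (mem_range.1 hj)
  simp only [Prod.fst_swap, Prod.snd_swap, hermiteFn_eq, rotationCoeff, Nat.choose_symm hjk]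
  have hf : (√(k.factorial : ℝ)) = √(k.choose j) * √(j.factorial) * √((k - j).factorial) := by
    rw [← Real.sqrt_mul (by positivity), ← Real.sqrt_mul (by positivity)]
    congr 1
    exact_mod_cast (Nat.choose_mul_factorial_mul_factorial hjk).symm
  have hc : (0 : ℝ) < k.choose j := by exact_mod_cast Nat.choose_pos hjk
  have hs : (k.choose j : ℝ) = √(k.choose j) * √(k.choose j) :=
    (Real.mul_self_sqrt hc.le).symm
  have h1 : 0 < √(k.choose j : ℝ) := Real.sqrt_pos.2 hc
  have h2 : 0 < √(j.factorial : ℝ) := Real.sqrt_pos.2 (by positivity)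
  have h3 : 0 < √((k - j).factorial : ℝ) := Real.sqrt_pos.2 (by positivity)
  rw [hf]
  nth_rewrite 1 [hs]
  field_simp

lemma integrable_eval_mul_gaussianPDFReal (p : Polynomial ℝ) :
    Integrable fun t => p.eval t * gaussianPDFReal 0 1 t := by
  induction p using Polynomial.induction_on' with
  | add p q hp hq =>
    simp only [Polynomial.eval_add, add_mul]
    exact hp.add hq
  | monomial k c =>
    have h := (integrable_rpow_mul_exp_neg_mul_sq (b := 1 / 2) (by norm_num)
      (s := k) (by linarith [k.cast_nonneg (α := ℝ)])).const_mul
        (c * (√(2 * Real.pi * ((1 : NNReal) : ℝ)))⁻¹)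
    refine h.congr (Filter.Eventually.of_forall fun t => ?_)
    simp only [gaussianPDFReal, Polynomial.eval_monomial, Real.rpow_natCast, sub_zero,
      NNReal.coe_one]
    rw [show -(1 / 2) * t ^ 2 = -t ^ 2 / (2 * 1) by ring]
    ring

lemma integrable_eval_gaussianReal (p : Polynomial ℝ) :
    Integrable (fun t => p.eval t) (gaussianReal 0 1) := by
  rw [gaussianReal_of_var_ne_zero 0 one_ne_zero,
    integrable_withDensity_iff_integrable_smul' (measurable_gaussianPDF 0 1)
      (Filter.Eventually.of_forall fun _ => gaussianPDF_lt_top)]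
  refine (integrable_eval_mul_gaussianPDFReal p).congr
    (Filter.Eventually.of_forall fun t => ?_)
  simp [toReal_gaussianPDF, mul_comm]

lemma hasDerivAt_gaussianPDFReal_zero_one (t : ℝ) :
    HasDerivAt (gaussianPDFReal 0 1) (-t * gaussianPDFReal 0 1 t) t := by
  have h : HasDerivAt (fun t : ℝ => -(t - 0) ^ 2 / (2 * ((1 : NNReal) : ℝ))) (-t) t := by
    have := (((hasDerivAt_id t).sub_const 0).pow 2).neg.div_const (2 * ((1 : NNReal) : ℝ))
    refine this.congr_deriv ?_
    simp only [id, NNReal.coe_one]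
    norm_num
    ring
  refine (h.exp.const_mul _).congr_deriv ?_
  simp only [gaussianPDFReal]
  ring

/-- Gaussian integration by parts for polynomials. -/
lemma integral_X_mul_gaussianReal (p : Polynomial ℝ) :
    ∫ t, (Polynomial.X * p).eval t ∂gaussianReal 0 1 =
      ∫ t, (Polynomial.derivative p).eval t ∂gaussianReal 0 1 := by
  rw [integral_gaussianReal_eq_integral_smul one_ne_zero,
    integral_gaussianReal_eq_integral_smul one_ne_zero]
  have h := integral_eq_zero_of_hasDerivAt_of_integrable
    (f := fun t => p.eval t * gaussianPDFReal 0 1 t)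
    (f' := fun t => (Polynomial.derivative p).eval t * gaussianPDFReal 0 1 t -
      (Polynomial.X * p).eval t * gaussianPDFReal 0 1 t)
    (fun t => by
      refine ((p.hasDerivAt t).mul (hasDerivAt_gaussianPDFReal_zero_one t)).congr_deriv ?_
      simp only [Polynomial.eval_mul, Polynomial.eval_X]
      ring)
    ((integrable_eval_mul_gaussianPDFReal _).sub (integrable_eval_mul_gaussianPDFReal _))
    (integrable_eval_mul_gaussianPDFReal _)
  rw [integral_sub (integrable_eval_mul_gaussianPDFReal _)
    (integrable_eval_mul_gaussianPDFReal _)] at h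
  simp only [smul_eq_mul, mul_comm (gaussianPDFReal 0 1 _)]
  linarith

lemma integral_realHermite_succ_mul (k : ℕ) (p : Polynomial ℝ) :
    ∫ t, (realHermite (k + 1) * p).eval t ∂gaussianReal 0 1 =
      ∫ t, (realHermite k * Polynomial.derivative p).eval t ∂gaussianReal 0 1 := by
  have h : realHermite (k + 1) * p = Polynomial.X * (realHermite k * p) -
      Polynomial.derivative (realHermite k) * p := by
    rw [realHermite_succ]; ring
  simp only [h, Polynomial.eval_sub]
  rw [integral_sub (integrable_eval_gaussianReal _) (integrable_eval_gaussianReal _),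
    integral_X_mul_gaussianReal, ← integral_sub (integrable_eval_gaussianReal _)
      (integrable_eval_gaussianReal _)]
  simp [Polynomial.derivative_mul]

lemma integral_realHermite_mul_realHermite (j k : ℕ) :
    ∫ t, (realHermite j * realHermite k).eval t ∂gaussianReal 0 1 =
      if j = k then (k.factorial : ℝ) else 0 := by
  induction j generalizing k with
  | zero =>
    cases k with
    | zero => simp [realHermite_zero]
    | succ k =>
      rw [mul_comm, integral_realHermite_succ_mul]
      simp [realHermite_zero]
  | succ j ih =>
    rw [integral_realHermite_succ_mul]
    cases k with
    | zero => simp [realHermite_zero]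
    | succ k =>
      have h : realHermite j * Polynomial.derivative (realHermite (k + 1)) =
          Polynomial.C ((k : ℝ) + 1) * (realHermite j * realHermite k) := by
        rw [derivative_realHermite_succ]; simp; ring
      simp only [h, Polynomial.eval_C_mul, integral_const_mul, ih, add_left_inj]
      split_ifs with hjk
      · push_cast [Nat.factorial_succ]; ring
      · ring

lemma hermiteFn_mul_hermiteFn (j k : ℕ) (t : ℝ) :
    hermiteFn j t * hermiteFn k t =
      (√(j.factorial) * √(k.factorial))⁻¹ * (realHermite j * realHermite k).eval t := by
  simp only [hermiteFn_eq, Polynomial.eval_mul]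
  field_simp

lemma integrable_hermiteFn_mul (j k : ℕ) :
    Integrable (fun t => hermiteFn j t * hermiteFn k t) (gaussianReal 0 1) := by
  simp only [hermiteFn_mul_hermiteFn]
  exact (integrable_eval_gaussianReal _).const_mul _

lemma integral_hermiteFn_mul (j k : ℕ) :
    ∫ t, hermiteFn j t * hermiteFn k t ∂gaussianReal 0 1 = if j = k then 1 else 0 := by
  simp only [hermiteFn_mul_hermiteFn, integral_const_mul, integral_realHermite_mul_realHermite]
  split_ifs with h
  · subst h
    rw [Real.mul_self_sqrt (by positivity), inv_mul_cancel₀ (by positivity)]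
  · ring

lemma integrable_hermiteMv_mul {n : ℕ} (α β : Fin n → ℕ) :
    Integrable (fun x => hermiteMv α x * hermiteMv β x) (gaussianN n) := by
  simp only [hermiteMv, ← prod_mul_distrib]
  exact Integrable.fintype_prod fun i => integrable_hermiteFn_mul (α i) (β i)

lemma integral_hermiteMv_mul {n : ℕ} (α β : Fin n → ℕ) :
    ∫ x, hermiteMv α x * hermiteMv β x ∂gaussianN n = if α = β then 1 else 0 := by
  simp only [hermiteMv, ← prod_mul_distrib, gaussianN]
  rw [integral_fintype_prod_eq_prod
    (f := fun i t => hermiteFn (α i) t * hermiteFn (β i) t)]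
  simp only [integral_hermiteFn_mul, prod_ite_zero, prod_const_one, mem_univ, true_imp_iff,
    funext_iff]

lemma hermiteMv_zero {n : ℕ} (x : Fin n → ℝ) : hermiteMv 0 x = 1 := by
  simp [hermiteMv, hermiteFn_zero]

lemma mul_hermiteFn (k : ℕ) :
    ∃ c d : ℝ, ∀ t, t * hermiteFn k t = c * hermiteFn (k + 1) t + d * hermiteFn (k - 1) t := by
  have hpos (j : ℕ) : √(j.factorial : ℝ) ≠ 0 := (Real.sqrt_pos.2 (by positivity)).ne'
  refine ⟨√((k + 1).factorial) / √(k.factorial),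
    k * √((k - 1).factorial) / √(k.factorial), fun t => ?_⟩
  have h : (realHermite (k + 1)).eval t =
      t * (realHermite k).eval t - k * (realHermite (k - 1)).eval t := by
    rw [realHermite_eval_succ]
    cases k with
    | zero => simp [realHermite_zero]
    | succ k => simp [derivative_realHermite_succ]
  have := hpos k
  have := hpos (k + 1)
  have := hpos (k - 1)
  simp only [hermiteFn_eq, h]
  field_simp
  ring

lemma hermiteMv_update {n : ℕ} (α : Fin n → ℕ) (i : Fin n) (k : ℕ) (x : Fin n → ℝ) :
    hermiteMv (Function.update α i k) x =
      hermiteFn k (x i) * ∏ j ∈ {i}ᶜ, hermiteFn (α j) (x j) := by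
  rw [hermiteMv, Fintype.prod_eq_mul_prod_compl i, Function.update_self]
  congr 1
  refine prod_congr rfl fun j hj => ?_
  rw [Function.update_of_ne (by simpa using hj)]

lemma eval_mem_span_hermiteMv {n : ℕ} (g : MvPolynomial (Fin n) ℝ) :
    (fun x => eval x g) ∈ Submodule.span ℝ (Set.range (hermiteMv (n := n))) := by
  induction g using MvPolynomial.induction_on with
  | C a =>
    convert Submodule.smul_mem _ a
      (Submodule.subset_span (Set.mem_range_self (f := hermiteMv (n := n)) 0)) using 1
    ext x
    simp [hermiteMv_zero]
  | add p q hp hq =>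
    convert Submodule.add_mem _ hp hq using 1
    ext x
    simp
  | mul_X p i hp =>
    rw [show (fun x => eval x (p * X i)) = fun x => eval x p * x i by ext x; simp]
    refine Submodule.span_induction
      (p := fun f _ => (fun x => f x * x i) ∈ Submodule.span ℝ (Set.range (hermiteMv (n := n))))
      ?_ ?_ ?_ ?_ hp
    · rintro _ ⟨α, rfl⟩
      obtain ⟨c, d, h⟩ := mul_hermiteFn (α i)
      convert Submodule.add_mem _
        (Submodule.smul_mem _ c (Submodule.subset_span
          (Set.mem_range_self (Function.update α i (α i + 1)))))
        (Submodule.smul_mem _ d (Submodule.subset_span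
          (Set.mem_range_self (Function.update α i (α i - 1))))) using 1
      ext x
      have hα := hermiteMv_update α i (α i) x
      rw [Function.update_eq_self] at hα
      simp only [Pi.add_apply, Pi.smul_apply, smul_eq_mul, hermiteMv_update, hα]
      linear_combination (∏ j ∈ {i}ᶜ, hermiteFn (α j) (x j)) * h (x i)
    · convert Submodule.zero_mem _ using 1
      ext x
      simp
    · intro f f' _ _ hf hf'
      convert Submodule.add_mem _ hf hf' using 1
      ext x
      simp [add_mul]
    · intro a f _ hf
      convert Submodule.smul_mem _ a hf using 1
      ext x
      simp [mul_assoc]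

/-- The multi-indices with all entries less than `K`. -/
def boxIndices (n K : ℕ) : Finset (Fin n → ℕ) := Fintype.piFinset fun _ => range K

lemma mem_boxIndices {n K : ℕ} {α : Fin n → ℕ} : α ∈ boxIndices n K ↔ ∀ i, α i < K := by
  simp [boxIndices]

lemma exists_hermite_expansion {n : ℕ} (g : MvPolynomial (Fin n) ℝ) :
    ∃ (K : ℕ) (c : (Fin n → ℕ) → ℝ),
      ∀ x, eval x g = ∑ α ∈ boxIndices n K, c α * hermiteMv α x := by
  obtain ⟨c, hc⟩ := Finsupp.mem_span_range_iff_exists_finsupp.1 (eval_mem_span_hermiteMv g)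
  refine ⟨c.support.sup (fun α => ∑ i, α i) + 1, c, fun x => ?_⟩
  have hsub : c.support ⊆ boxIndices n (c.support.sup (fun α => ∑ i, α i) + 1) := by
    intro α hα
    refine mem_boxIndices.2 fun i => Nat.lt_succ_of_le ?_
    exact (single_le_sum (fun j _ => Nat.zero_le (α j)) (mem_univ i)).trans
      (le_sup (f := fun α : Fin n → ℕ => ∑ i, α i) hα)
  rw [Finsupp.sum_of_support_subset _ hsub _ (by simp)] at hc
  simpa using (congrFun hc x).symm

lemma hermiteCoeffF_sum {n : ℕ} (s : Finset (Fin n → ℕ)) (c : (Fin n → ℕ) → ℝ)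
    (β : Fin n → ℕ) :
    hermiteCoeffF (fun x => ∑ α ∈ s, c α * hermiteMv α x) β = if β ∈ s then c β else 0 := by
  simp only [hermiteCoeffF, sum_mul, mul_assoc]
  rw [integral_finsetSum _ fun α _ => (integrable_hermiteMv_mul α β).const_mul _]
  simp [integral_const_mul, integral_hermiteMv_mul]

lemma weightEq_of_expansion {n : ℕ} (m : ℕ) {g : MvPolynomial (Fin n) ℝ}
    {s : Finset (Fin n → ℕ)} {c : (Fin n → ℕ) → ℝ}
    (h : ∀ x, eval x g = ∑ α ∈ s, c α * hermiteMv α x) :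
    weightEq m g = ∑ α ∈ s, if ∑ i, α i = m then c α ^ 2 else 0 := by
  have hc (α : Fin n → ℕ) : hermiteCoeff g α = if α ∈ s then c α else 0 := by
    rw [hermiteCoeff, funext h, hermiteCoeffF_sum]
  rw [weightEq, tsum_eq_sum (s := s) fun α hα => by simp [hc, hα]]
  refine sum_congr rfl fun α hα => ?_
  simp [hc, hα]

lemma eval_zoom {n : ℕ} (g : MvPolynomial (Fin n) ℝ) (lam : ℝ) (x y : Fin n → ℝ) :
    eval y (zoom g lam x) = eval (fun i => √(1 - lam) * x i + √lam * y i) g := by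
  induction g using MvPolynomial.induction_on with
  | C a => simp [zoom]
  | add p q hp hq => simp only [zoom, map_add] at *; rw [hp, hq]
  | mul_X p i hp => simp only [zoom, map_mul] at *; rw [hp]; simp

/-- The coefficient of `h_{α-β}(x) h_β(y)` in `h_α(a x + b y)`. -/
noncomputable def rotationCoeffMv {n : ℕ} (a b : ℝ) (α β : Fin n → ℕ) : ℝ :=
  ∏ i, rotationCoeff a b (α i) (β i)

lemma le_of_rotationCoeffMv_ne_zero {n : ℕ} {a b : ℝ} {α β : Fin n → ℕ}
    (h : rotationCoeffMv a b α β ≠ 0) : β ≤ α := by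
  intro i
  by_contra! hi
  exact h (prod_eq_zero (mem_univ i) (rotationCoeff_of_lt a b hi))

lemma hermiteMv_rotation {n : ℕ} {a b : ℝ} (hab : a ^ 2 + b ^ 2 = 1) {K : ℕ}
    {α : Fin n → ℕ} (hα : α ∈ boxIndices n K) (x y : Fin n → ℝ) :
    hermiteMv α (fun i => a * x i + b * y i) =
      ∑ β ∈ boxIndices n K,
        rotationCoeffMv a b α β * hermiteMv (α - β) x * hermiteMv β y := by
  simp only [hermiteMv, rotationCoeffMv, ← prod_mul_distrib, boxIndices, Pi.sub_apply]
  rw [← prod_univ_sum (fun _ => range K) fun i j =>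
    rotationCoeff a b (α i) j * hermiteFn (α i - j) (x i) * hermiteFn j (y i)]
  exact prod_congr rfl fun i _ => hermiteFn_rotation hab (mem_boxIndices.1 hα i) _ _

lemma integral_sq_sum_hermiteMv_sub {n : ℕ} (s : Finset (Fin n → ℕ)) (β : Fin n → ℕ)
    (d : (Fin n → ℕ) → ℝ) (hd : ∀ α, d α ≠ 0 → β ≤ α) :
    ∫ x, (∑ α ∈ s, d α * hermiteMv (α - β) x) ^ 2 ∂gaussianN n = ∑ α ∈ s, d α ^ 2 := by
  have hsq (x : Fin n → ℝ) : (∑ α ∈ s, d α * hermiteMv (α - β) x) ^ 2 =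
      ∑ α ∈ s, ∑ α' ∈ s, d α * d α' * (hermiteMv (α - β) x * hermiteMv (α' - β) x) := by
    rw [sq, sum_mul_sum]
    exact sum_congr rfl fun _ _ => sum_congr rfl fun _ _ => by ring
  simp only [hsq]
  rw [integral_finsetSum _ fun α _ => integrable_finsetSum _ fun α' _ =>
    (integrable_hermiteMv_mul _ _).const_mul _]
  refine sum_congr rfl fun α hα => ?_
  rw [integral_finsetSum _ fun α' _ => (integrable_hermiteMv_mul _ _).const_mul _]
  simp only [integral_const_mul, integral_hermiteMv_mul]
  rw [sum_eq_single_of_mem α hα]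
  · simp [sq]
  · intro α' _ hne
    by_cases h : d α = 0
    · simp [h]
    by_cases h' : d α' = 0
    · simp [h']
    rw [if_neg, mul_zero]
    intro heq
    exact hne ((tsub_left_inj (hd α' h') (hd α h)).1 heq.symm)

lemma integrable_sq_sum_hermiteMv_sub {n : ℕ} (s : Finset (Fin n → ℕ)) (β : Fin n → ℕ)
    (d : (Fin n → ℕ) → ℝ) :
    Integrable (fun x => (∑ α ∈ s, d α * hermiteMv (α - β) x) ^ 2) (gaussianN n) := by
  simp only [sq, sum_mul_sum]
  refine integrable_finsetSum _ fun α _ => integrable_finsetSum _ fun α' _ => ?_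
  refine ((integrable_hermiteMv_mul (α - β) (α' - β)).const_mul (d α * d α')).congr
    (Filter.Eventually.of_forall fun x => ?_)
  ring

lemma sum_prod_choose_mul_pow {n : ℕ} (p q : ℝ) {K : ℕ} {α : Fin n → ℕ}
    (hα : α ∈ boxIndices n K) (m : ℕ) :
    ∑ β ∈ boxIndices n K, (if ∑ i, β i = m then
        ∏ i, ((α i).choose (β i) * p ^ (α i - β i) * q ^ β i) else 0) =
      (∑ i, α i).choose m * p ^ (∑ i, α i - m) * q ^ m := by
  have hpow (N K : ℕ) (hN : N < K) :
      (Polynomial.C q * Polynomial.X + Polynomial.C p) ^ N =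
        ∑ j ∈ range K, Polynomial.C (N.choose j * p ^ (N - j) * q ^ j) * Polynomial.X ^ j := by
    have hsub : range (N + 1) ⊆ range K := range_subset_range.2 hN
    rw [← sum_subset hsub fun j _ hj => by
      rw [Nat.choose_eq_zero_of_lt (by simpa using hj)]; simp]
    rw [add_pow]
    refine sum_congr rfl fun j _ => ?_
    simp only [map_mul, map_pow, map_natCast]
    ring
  have h : ∏ i, (Polynomial.C q * Polynomial.X + Polynomial.C p) ^ α i =
      ∑ β ∈ boxIndices n K,
        Polynomial.C (∏ i, ((α i).choose (β i) * p ^ (α i - β i) * q ^ β i)) *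
          Polynomial.X ^ ∑ i, β i := by
    rw [prod_congr rfl fun i _ => hpow (α i) K (mem_boxIndices.1 hα i), prod_univ_sum]
    refine sum_congr rfl fun β _ => ?_
    rw [prod_mul_distrib, prod_pow_eq_pow_sum, map_prod]
  rw [prod_pow_eq_pow_sum, hpow _ _ (Nat.lt_succ_of_le (Nat.le_add_right (∑ i, α i) m))] at h
  have hm := congrArg (fun P => Polynomial.coeff P m) h
  simp only [Polynomial.finsetSum_coeff, Polynomial.coeff_C_mul_X_pow] at hm
  rw [sum_ite_eq, if_pos (by simp)] at hm
  simpa only [eq_comm] using hm.symm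

/-- Expected level-`m` Hermite weight of a random zoom: for a polynomial `g`,
`0 ≤ λ ≤ 1` and `m ∈ ℕ`,
`E_{x ∼ N(0,1)^n}[W^{=m}[g_{λ|x}]] = Σ_{M ≥ m} C(M,m)·λ^m·(1-λ)^{M-m}·W^{=M}[g]`. -/
theorem expected_weight_of_zoom (n : ℕ) (g : MvPolynomial (Fin n) ℝ)
    (lam : ℝ) (h0 : 0 ≤ lam) (h1 : lam ≤ 1) (m : ℕ) :
    (∫ x, weightEq m (zoom g lam x) ∂(gaussianN n)) =
      ∑' M : ℕ, if m ≤ M then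
          (M.choose m : ℝ) * lam ^ m * (1 - lam) ^ (M - m) * weightEq M g
        else 0 := by
  obtain ⟨K, c, hg⟩ := exists_hermite_expansion g
  have ha : √(1 - lam) ^ 2 = 1 - lam := Real.sq_sqrt (sub_nonneg.2 h1)
  have hb : √lam ^ 2 = lam := Real.sq_sqrt h0
  have hab : √(1 - lam) ^ 2 + √lam ^ 2 = 1 := by rw [ha, hb]; ring
  let κ : (Fin n → ℕ) → (Fin n → ℕ) → ℝ := rotationCoeffMv √(1 - lam) √lam
  have hzoom (x y : Fin n → ℝ) : eval y (zoom g lam x) = ∑ β ∈ boxIndices n K,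
      (∑ α ∈ boxIndices n K, c α * κ α β * hermiteMv (α - β) x) * hermiteMv β y := by
    rw [eval_zoom, hg]
    simp only [sum_mul]
    rw [sum_comm]
    refine sum_congr rfl fun α hα => ?_
    rw [hermiteMv_rotation hab hα, mul_sum]
    exact sum_congr rfl fun β _ => by ring
  have hκ (α β : Fin n → ℕ) : κ α β ^ 2 =
      ∏ i, ((α i).choose (β i) * (1 - lam) ^ (α i - β i) * lam ^ β i) := by
    simp only [κ, rotationCoeffMv, ← prod_pow, rotationCoeff_sq, ha, hb]
  have hleft : ∫ x, weightEq m (zoom g lam x) ∂(gaussianN n) = ∑ α ∈ boxIndices n K,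
      (∑ i, α i).choose m * (1 - lam) ^ (∑ i, α i - m) * lam ^ m * c α ^ 2 := by
    simp only [fun x => weightEq_of_expansion m (hzoom x)]
    rw [integral_finsetSum]
    · trans ∑ β ∈ boxIndices n K, ∑ α ∈ boxIndices n K,
          (if ∑ i, β i = m then κ α β ^ 2 else 0) * c α ^ 2
      · refine sum_congr rfl fun β _ => ?_
        split_ifs
        · rw [integral_sq_sum_hermiteMv_sub _ _ _ fun α h =>
            le_of_rotationCoeffMv_ne_zero (right_ne_zero_of_mul h)]
          exact sum_congr rfl fun α _ => by ring
        · simp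
      · rw [sum_comm]
        refine sum_congr rfl fun α hα => ?_
        simp only [← sum_mul, hκ, sum_prod_choose_mul_pow _ _ hα]
    · intro β _
      split_ifs
      · exact integrable_sq_sum_hermiteMv_sub _ _ _
      · simp
  have hright (M : ℕ) : (if m ≤ M then
        (M.choose m : ℝ) * lam ^ m * (1 - lam) ^ (M - m) * weightEq M g else 0) =
      ∑ α ∈ boxIndices n K, if ∑ i, α i = M then
        (M.choose m : ℝ) * (1 - lam) ^ (M - m) * lam ^ m * c α ^ 2 else 0 := by
    rw [weightEq_of_expansion M hg]
    split_ifs with hM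
    · rw [mul_sum]
      refine sum_congr rfl fun α _ => ?_
      split_ifs <;> ring
    · simp [Nat.choose_eq_zero_of_lt (not_le.1 hM)]
  rw [hleft, tsum_congr hright, Summable.tsum_finsetSum]
  · refine sum_congr rfl fun α _ => ?_
    rw [tsum_eq_single (∑ i, α i) fun M hM => if_neg hM.symm, if_pos rfl]
  · intro α _
    exact summable_of_ne_finset_zero (s := {∑ i, α i}) fun M hM =>
      if_neg fun h => hM (by simp [h])
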